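/- arXiv:1906.03062 — 2 statements merged into one kernel-verified Lean document; each statement's English description precedes it below -/
import Mathlib

section
/- Let n ≥ 2, k ≥ 2, N > 0, and let {(β_i,θ_i)}_{i=1}^{k+1} be a 1/N-quadrature rule exact for Λ_{n,k}, with nodes -1 ≤ β_1 < ⋯ < β_{k+1} < 1 and weights θ_i > 0. Then for every j with 0 ≤ j ≤ k-2, the partial product q_j(t) = ∏_{i=1}^j (t-β_i) is positive definite; that is, ∫ q_j·P_m^{(n)} dμ_n ≥ 0 for every m ≥ 0. -/
open MeasureTheory Finset
open scoped Classical

/-- The (unnormalized) Gegenbauer weight `(1 - t²)^((n-3)/2)`. -/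
noncomputable def gegWeight (n : ℕ) (t : ℝ) : ℝ := (1 - t ^ 2) ^ (((n : ℝ) - 3) / 2)

/-- Integration against the probability measure `μ_n` on `[-1,1]` with density
proportional to `(1 - t²)^((n-3)/2)`. -/
noncomputable def gegInt (n : ℕ) (f : ℝ → ℝ) : ℝ :=
  (∫ t in Set.Icc (-1 : ℝ) 1, gegWeight n t)⁻¹ *
    ∫ t in Set.Icc (-1 : ℝ) 1, f t * gegWeight n t

/-- `P : ℕ → ℝ[X]` is the family of Gegenbauer polynomials for dimension `n`:
`deg P_i = i`, `P_i(1) = 1`, pairwise orthogonal in `L²(μ_n)`. -/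
def IsGegenbauer (n : ℕ) (P : ℕ → Polynomial ℝ) : Prop :=
  (∀ i, (P i).natDegree = i) ∧ (∀ i, (P i).eval 1 = 1) ∧
    ∀ i j, i ≠ j → gegInt n (fun t => (P i).eval t * (P j).eval t) = 0

/-- A `1/N`-quadrature rule with nodes `α` and weights `ρ`, exact for a set `Λ`
of functions on `[-1,1]`. -/
def IsQuadratureRule (n : ℕ) (N : ℝ) {k : ℕ} (α ρ : Fin k → ℝ)
    (Λ : Set (ℝ → ℝ)) : Prop :=
  (∀ i, -1 ≤ α i) ∧ (∀ i, α i < 1) ∧ StrictMono α ∧ (∀ i, 0 < ρ i) ∧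
    ∀ f ∈ Λ, gegInt n f = f 1 / N + ∑ i, ρ i * f (α i)

/-- Membership of a polynomial in `Λ_{n,k} = 𝒫_{2k-1} ⊕ span{P_{2k+2}, P_{2k+3}}`:
degree at most `2k+3` and orthogonality to `P_{2k}` and `P_{2k+1}` in `L²(μ_n)`. -/
def InLambda (n k : ℕ) (P : ℕ → Polynomial ℝ) (p : Polynomial ℝ) : Prop :=
  p.natDegree ≤ 2 * k + 3 ∧
    gegInt n (fun t => p.eval t * (P (2 * k)).eval t) = 0 ∧
    gegInt n (fun t => p.eval t * (P (2 * k + 1)).eval t) = 0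

/-- The space `Λ_{n,k}`, as a set of functions on `ℝ`. -/
def LambdaSpace (n k : ℕ) (P : ℕ → Polynomial ℝ) : Set (ℝ → ℝ) :=
  {f | ∃ p : Polynomial ℝ, InLambda n k P p ∧ f = fun t => p.eval t}

open Polynomial

lemma aux_intW (n : ℕ) (hn : 2 ≤ n) : IntegrableOn (gegWeight n) (Set.Icc (-1 : ℝ) 1) := by
  rcases hn.eq_or_lt with rfl | h3
  · have h := (intervalIntegrable_iff_integrableOn_Icc_of_le (by norm_num : (-1 : ℝ) ≤ 1)).mp
      Polynomial.Chebyshev.intervalIntegrable_sqrt_one_sub_sq_inv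
    refine h.congr_fun (fun x hx => ?_) measurableSet_Icc
    have h0 : 0 ≤ 1 - x ^ 2 := by nlinarith [hx.1, hx.2]
    simp only [gegWeight]
    rw [Real.sqrt_eq_rpow, Real.inv_rpow h0, ← Real.rpow_neg h0]
    norm_num
  · apply ContinuousOn.integrableOn_Icc
    unfold gegWeight
    have h3' : (3 : ℝ) ≤ n := by exact_mod_cast h3
    exact ContinuousOn.rpow_const (by fun_prop) fun x _ => Or.inr (by linarith)

def PSDf (L : ℝ[X] →ₗ[ℝ] ℝ) : Prop := ∀ f, 0 ≤ L (f * f)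

lemma psd_cs {L : ℝ[X] →ₗ[ℝ] ℝ} (hL : PSDf L) {f : ℝ[X]} (hf : L (f * f) = 0) (g : ℝ[X]) :
    L (f * g) = 0 := by
  by_contra hne
  have h := hL (g + (-(L (g * g) + 1) / (2 * L (f * g))) • f)
  have e : (g + (-(L (g * g) + 1) / (2 * L (f * g))) • f) * (g + (-(L (g * g) + 1) / (2 * L (f * g))) • f)
      = g * g + (2 * (-(L (g * g) + 1) / (2 * L (f * g)))) • (f * g)
        + ((-(L (g * g) + 1) / (2 * L (f * g))) ^ 2) • (f * f) := by
    simp only [smul_eq_C_mul, map_mul, map_pow, map_ofNat]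
    ring
  rw [e] at h
  simp only [map_add, map_smul, smul_eq_mul, hf] at h
  have : 2 * (-(L (g * g) + 1) / (2 * L (f * g))) * L (f * g) = -(L (g * g) + 1) := by
    field_simp
  linarith

lemma decomp {r : ℝ[X]} {e : ℕ} (hr : r.Monic) (hd : r.natDegree = e) {s : ℝ[X]}
    (hs : s.natDegree ≤ e) : ∃ (α : ℝ) (s' : ℝ[X]), s = α • r + s' ∧ s'.degree < e := by
  refine ⟨s.coeff e, s - s.coeff e • r, by ring, ?_⟩
  rw [degree_lt_iff_coeff_zero]
  intro m hm
  rcases hm.eq_or_lt with rfl | hm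
  · have : r.coeff e = 1 := by rw [← hd]; exact hr
    simp [this]
  · simp [coeff_eq_zero_of_natDegree_lt (lt_of_le_of_lt hs hm),
      coeff_eq_zero_of_natDegree_lt (lt_of_le_of_lt hd.le hm)]

/-- monic of degree `d`, orthogonal to everything of lower degree -/
def MOrth (L : ℝ[X] →ₗ[ℝ] ℝ) (d : ℕ) (r : ℝ[X]) : Prop :=
  r.Monic ∧ r.natDegree = d ∧ ∀ s : ℝ[X], s.degree < d → L (r * s) = 0

lemma exists_morth {L : ℝ[X] →ₗ[ℝ] ℝ} (hL : PSDf L) (d : ℕ) : ∃ r, MOrth L d r := by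
  induction d using Nat.strong_induction_on with
  | _ d ih =>
    have key : ∀ e ≤ d, ∃ r : ℝ[X], r.Monic ∧ r.natDegree = d ∧
        ∀ s : ℝ[X], s.degree < e → L (r * s) = 0 := by
      intro e
      induction e with
      | zero =>
        intro _
        refine ⟨X ^ d, monic_X_pow d, natDegree_X_pow d, ?_⟩
        intro s hs
        have : s = 0 := by
          by_contra h
          rw [degree_eq_natDegree h] at hs
          exact absurd hs (by simp)
        simp [this]
      | succ e ihe =>
        intro he
        obtain ⟨r, hr, hd, ho⟩ := ihe (by omega)
        obtain ⟨t, ht, htd, hto⟩ := ih e (by omega)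
        have hlt : ((L (r * t) / L (t * t)) • t).degree < r.degree := by
          refine lt_of_le_of_lt (degree_smul_le _ _) ?_
          rw [degree_eq_natDegree ht.ne_zero, degree_eq_natDegree hr.ne_zero, htd, hd]
          exact_mod_cast (by omega : e < d)
        refine ⟨r - (L (r * t) / L (t * t)) • t, hr.sub_of_left hlt, ?_, ?_⟩
        · rw [natDegree_eq_of_degree_eq (degree_sub_eq_left_of_degree_lt hlt), hd]
        · intro s hs
          have hs' : s.natDegree ≤ e := by
            rw [natDegree_le_iff_degree_le]
            exact Order.lt_succ_iff.mp hs
          obtain ⟨α, s', rfl, h'⟩ := decomp ht htd hs'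
          have h1 := ho s' h'
          have h2 := hto s' h'
          have e1 : (r - (L (r * t) / L (t * t)) • t) * (α • t + s') =
            α • (r * t) + r * s' - (L (r * t) / L (t * t) * α) • (t * t)
              - (L (r * t) / L (t * t)) • (t * s') := by
            simp only [smul_eq_C_mul, map_mul]; ring
          rw [e1]
          simp only [map_add, map_sub, map_smul, smul_eq_mul, h1, h2]
          by_cases h0 : L (t * t) = 0
          · have := psd_cs hL h0 r
            rw [mul_comm r t, this, h0]; simp
          · field_simp
            ring
    exact key d le_rfl

lemma morth_lead {L : ℝ[X] →ₗ[ℝ] ℝ} {d : ℕ} {p q : ℝ[X]} (hp : MOrth L d p)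
    (hq : q.Monic) (hqd : q.natDegree = d) : L (p * q) = L (p * p) := by
  obtain ⟨hpm, hpd, ho⟩ := hp
  have : (q - p).degree < d := by
    rcases eq_or_ne (q - p) 0 with h | h
    · rw [h]; simp
    · have := degree_sub_lt_left (p := q) (q := p) (by
        rw [degree_eq_natDegree hq.ne_zero, degree_eq_natDegree hpm.ne_zero, hqd, hpd])
        hq.ne_zero (by rw [hq.leadingCoeff, hpm.leadingCoeff])
      rwa [degree_eq_natDegree hq.ne_zero, hqd] at this
  have h := ho _ this
  rw [mul_sub, map_sub] at h
  linarith

lemma core (j : ℕ) : ∀ (L : ℝ[X] →ₗ[ℝ] ℝ) (a : ℕ → ℝ)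
    (_ : ∀ i ≤ j, PSDf (L ∘ₗ LinearMap.mulLeft ℝ (∏ l ∈ range i, (X - C (a l)))))
    (d : ℕ) (p : ℝ[X]) (_ : MOrth L d p), 0 ≤ L (p * ∏ l ∈ range j, (X - C (a l))) := by
  induction j with
  | zero =>
    intro L a H d p hp
    rcases Nat.eq_zero_or_pos d with rfl | hd
    · have : p = 1 := hp.1.natDegree_eq_zero.mp hp.2.1
      have h := H 0 le_rfl 1
      subst this
      simpa using h
    · have := hp.2.2 1 (by simpa using hd)
      simp only [range_zero, prod_empty, this, le_refl]
  | succ j ih =>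
    intro L a H d p hp
    set L' : ℝ[X] →ₗ[ℝ] ℝ := L ∘ₗ LinearMap.mulLeft ℝ (X - C (a 0)) with hL'
    have happ : ∀ f, L' f = L ((X - C (a 0)) * f) := fun f => rfl
    have H' : ∀ i ≤ j, PSDf (L' ∘ₗ LinearMap.mulLeft ℝ (∏ l ∈ range i, (X - C (a (l + 1))))) := by
      intro i hi f
      have h := H (i + 1) (by omega) f
      simp only [LinearMap.comp_apply, LinearMap.mulLeft_apply, prod_range_succ'] at h ⊢
      rw [happ]
      convert h using 2
      ring
    have hPL : PSDf L := by
      intro f; have h := H 0 (by omega) f; simpa using h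
    have hPL' : PSDf L' := by
      intro f; have h := H' 0 (by omega) f; simpa using h
    have goal_eq : ∀ f, L (f * ∏ l ∈ range (j + 1), (X - C (a l)))
        = L' (f * ∏ l ∈ range j, (X - C (a (l + 1)))) := by
      intro f
      rw [happ, prod_range_succ']
      congr 1; ring
    rw [goal_eq]
    rcases Nat.eq_zero_or_pos d with rfl | hd
    · refine ih L' (fun l => a (l + 1)) H' 0 p ⟨hp.1, hp.2.1, ?_⟩
      intro s hs
      have : s = 0 := by
        by_contra h
        rw [degree_eq_natDegree h] at hs
        exact absurd hs (by simp)
      simp [this]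
    obtain ⟨d, rfl⟩ : ∃ e, d = e + 1 := ⟨d - 1, by omega⟩
    obtain ⟨r, hr⟩ := exists_morth hPL' d
    set c := L' (p * r) / L' (r * r) with hc
    have hc0 : 0 ≤ c := by
      refine div_nonneg ?_ (hPL' r)
      have h1 : L' (p * r) = L (p * ((X - C (a 0)) * r)) := by
        rw [happ]; congr 1; ring
      rw [h1, morth_lead hp ((monic_X_sub_C _).mul hr.1)]
      · exact hPL p
      · rw [(monic_X_sub_C _).natDegree_mul hr.1, natDegree_X_sub_C, hr.2.1]; omega
    have hlow : ∀ s : ℝ[X], s.degree < d → L' (p * s) = 0 := by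
      intro s hs
      have h1 : L' (p * s) = L (p * ((X - C (a 0)) * s)) := by
        rw [happ]; congr 1; ring
      rw [h1]
      apply hp.2.2
      rw [degree_mul, degree_X_sub_C]
      rcases eq_or_ne s 0 with rfl | h0
      · simp
      · rw [degree_eq_natDegree h0] at hs ⊢
        norm_cast at hs ⊢
        omega
    have hlt : (c • r).degree < p.degree := by
      refine lt_of_le_of_lt (degree_smul_le _ _) ?_
      rw [degree_eq_natDegree hr.1.ne_zero, degree_eq_natDegree hp.1.ne_zero, hr.2.1, hp.2.1]
      exact_mod_cast (by omega : d < d + 1)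
    have hp' : MOrth L' (d + 1) (p - c • r) := by
      refine ⟨hp.1.sub_of_left hlt, ?_, ?_⟩
      · rw [natDegree_eq_of_degree_eq (degree_sub_eq_left_of_degree_lt hlt), hp.2.1]
      · intro s hs
        have hs' : s.natDegree ≤ d := by
          rw [natDegree_le_iff_degree_le]
          exact Order.lt_succ_iff.mp hs
        obtain ⟨α, s', rfl, h'⟩ := decomp hr.1 hr.2.1 hs'
        have h1 := hlow s' h'
        have h2 := hr.2.2 s' h'
        have e1 : (p - c • r) * (α • r + s') =
            α • (p * r) + p * s' - (c * α) • (r * r) - c • (r * s') := by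
          simp only [smul_eq_C_mul, map_mul]; ring
        rw [e1]
        simp only [map_add, map_sub, map_smul, smul_eq_mul, h1, h2]
        by_cases h0 : L' (r * r) = 0
        · have := psd_cs hPL' h0 p
          rw [mul_comm p r, this, h0]; simp
        · rw [hc]; field_simp
          ring
    have i1 := ih L' (fun l => a (l + 1)) H' _ _ hp'
    have i2 := ih L' (fun l => a (l + 1)) H' _ _ hr
    have e2 : p * ∏ l ∈ range j, (X - C (a (l + 1))) =
        (p - c • r) * ∏ l ∈ range j, (X - C (a (l + 1)))
          + c • (r * ∏ l ∈ range j, (X - C (a (l + 1)))) := by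
      simp only [smul_eq_C_mul]; ring
    rw [e2, map_add, map_smul, smul_eq_mul]
    exact add_nonneg i1 (mul_nonneg hc0 i2)

/-- `gegInt` as a linear functional on polynomials. -/
noncomputable def gegL (n : ℕ) (hn : 2 ≤ n) : ℝ[X] →ₗ[ℝ] ℝ where
  toFun p := gegInt n (fun t => p.eval t)
  map_add' p q := by
    have hi : ∀ p : ℝ[X], IntegrableOn (fun t => p.eval t * gegWeight n t) (Set.Icc (-1 : ℝ) 1) :=
      fun p => (aux_intW n hn).continuousOn_mul p.continuous.continuousOn isCompact_Icc
    simp only [gegInt, eval_add, add_mul]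
    rw [integral_add (hi p) (hi q), mul_add]
  map_smul' c p := by
    simp only [gegInt, eval_smul, smul_eq_mul, mul_assoc, RingHom.id_apply]
    rw [integral_const_mul]
    ring

lemma gegL_mul {n : ℕ} (hn : 2 ≤ n) (p q : ℝ[X]) :
    gegL n hn (p * q) = gegInt n (fun t => p.eval t * q.eval t) := by
  simp [gegL]

lemma P_ne {n : ℕ} {P : ℕ → ℝ[X]} (hP : IsGegenbauer n P) (i : ℕ) : P i ≠ 0 := by
  intro h
  have := hP.2.1 i
  simp [h] at this

lemma gegL_orth {n : ℕ} (hn : 2 ≤ n) {P : ℕ → ℝ[X]} (hP : IsGegenbauer n P) (m : ℕ) :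
    ∀ d ≤ m, ∀ s : ℝ[X], s.degree < d → gegL n hn (s * P m) = 0 := by
  intro d
  induction d with
  | zero =>
    intro _ s hs
    have : s = 0 := by
      by_contra h
      rw [degree_eq_natDegree h] at hs
      exact absurd hs (by simp)
    simp [this]
  | succ d ih =>
    intro hd s hs
    have hs' : s.natDegree ≤ d := by
      rw [natDegree_le_iff_degree_le]
      exact Order.lt_succ_iff.mp hs
    have hl : (P d).leadingCoeff ≠ 0 := leadingCoeff_ne_zero.mpr (P_ne hP d)
    obtain ⟨α, s', e, h'⟩ := decomp (r := (P d).leadingCoeff⁻¹ • P d) (e := d)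
      (by rw [Monic, smul_eq_C_mul, leadingCoeff_mul, leadingCoeff_C]; exact inv_mul_cancel₀ hl)
      (by rw [natDegree_smul _ (inv_ne_zero hl), hP.1]) hs'
    rw [e, add_mul, map_add, ih (by omega) s' h', smul_smul, smul_mul_assoc, map_smul, gegL_mul,
      hP.2.2 d m (by omega)]
    simp

/-- the discrete functional -/
noncomputable def DL (N : ℝ) {k : ℕ} (β θ : Fin k → ℝ) : ℝ[X] →ₗ[ℝ] ℝ where
  toFun p := p.eval 1 / N + ∑ i, θ i * p.eval (β i)
  map_add' p q := by
    simp only [eval_add, mul_add, sum_add_distrib]; ring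
  map_smul' c p := by
    simp only [eval_smul, smul_eq_mul, RingHom.id_apply, mul_add, mul_sum]
    congr 1
    · ring
    · exact sum_congr rfl fun i _ => by ring

lemma DL_apply (N : ℝ) {k : ℕ} (β θ : Fin k → ℝ) (p : ℝ[X]) :
    DL N β θ p = p.eval 1 / N + ∑ i, θ i * p.eval (β i) := rfl

/-- Leading coefficients are positive. -/
lemma lead_pos {L : ℝ[X] →ₗ[ℝ] ℝ} {P : ℕ → ℝ[X]} (K : ℕ) (hdeg : ∀ i, (P i).natDegree = i)
    (h1 : ∀ i, (P i).eval 1 = 1)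
    (hL1 : ∀ f : ℝ[X], 0 ≤ L ((1 - X) * (f * f)))
    (hpos : ∀ i, 0 < L (P i * P i))
    (horth : ∀ m ≤ K, ∀ s : ℝ[X], s.degree < m → L (s * P m) = 0) :
    ∀ m ≤ K, 0 < (P m).leadingCoeff := by
  intro m
  induction m with
  | zero =>
    intro _
    have h := h1 0
    rw [eq_C_of_natDegree_eq_zero (hdeg 0)] at h ⊢
    simp only [eval_C] at h
    rw [leadingCoeff_C, h]; exact one_pos
  | succ m ih =>
    intro hm
    have hne : ∀ i, P i ≠ 0 := fun i h => by have := h1 i; simp [h] at this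
    have hl := ih (by omega)
    have hroot : (P (m + 1) - P m).IsRoot 1 := by simp [h1]
    obtain ⟨g', hg'⟩ := dvd_iff_isRoot.mpr hroot
    obtain ⟨g, hg⟩ : ∃ g, P (m + 1) - P m = (1 - X) * g := ⟨-g', by rw [hg']; simp; ring⟩
    have hdm : ∀ i, (P i).degree = i := fun i => by rw [degree_eq_natDegree (hne i), hdeg]
    have hgc : ∀ i, (P (m + 1)).coeff (i + 1) - (P m).coeff (i + 1) = g.coeff (i + 1) - g.coeff i := by
      intro i
      rw [← coeff_sub, hg, sub_mul, one_mul, coeff_sub, coeff_X_mul]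
    have hgdeg : g.natDegree ≤ m := by
      have hd : (P (m + 1) - P m).natDegree ≤ m + 1 := by
        refine (natDegree_sub_le _ _).trans ?_
        rw [hdeg, hdeg]; simp
      rcases eq_or_ne g 0 with rfl | h0
      · simp
      rw [hg, natDegree_mul (by intro h; have := congrArg (eval 0) h; simp at this) h0] at hd
      have : (1 - X : ℝ[X]).natDegree = 1 := by
        rw [show (1 - X : ℝ[X]) = -(X - C 1) by simp, natDegree_neg, natDegree_X_sub_C]
      omega
    have hgm : g.coeff m = -(P (m + 1)).leadingCoeff := by
      have h := hgc m
      rw [coeff_eq_zero_of_natDegree_lt (p := P m) (by rw [hdeg]; omega),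
        coeff_eq_zero_of_natDegree_lt (p := g) (by omega)] at h
      rw [leadingCoeff, hdeg]; linarith
    have hlow : ∀ s : ℝ[X], s.degree < m → L ((1 - X) * (g * s)) = 0 := by
      intro s hs
      have e : (1 - X) * (g * s) = s * P (m + 1) - s * P m := by
        rw [← mul_assoc, ← hg]; ring
      rw [e, map_sub, horth (m + 1) hm s (hs.trans (by exact_mod_cast Nat.lt_succ_self m)),
        horth m (by omega) s hs, sub_zero]
    have hA : L ((1 - X) * (g * P m)) = - L (P m * P m) := by
      have e : (1 - X) * (g * P m) = P m * P (m + 1) - P m * P m := by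
        rw [← mul_assoc, ← hg]; ring
      rw [e, map_sub, horth (m + 1) hm (P m) (by rw [hdm]; exact_mod_cast Nat.lt_succ_self m)]
      ring
    have hdd : (g.coeff m • P m - (P m).leadingCoeff • g).degree < m := by
      rw [degree_lt_iff_coeff_zero]
      intro i hi
      rcases hi.eq_or_lt with rfl | hi
      · simp [leadingCoeff, hdeg]; ring
      · simp [coeff_eq_zero_of_natDegree_lt (p := P m) (n := i) (by rw [hdeg]; omega),
          coeff_eq_zero_of_natDegree_lt (p := g) (n := i) (by omega)]
    have hB := hlow _ hdd
    have e2 : (1 - X) * (g * (g.coeff m • P m - (P m).leadingCoeff • g)) =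
      g.coeff m • ((1 - X) * (g * P m)) - (P m).leadingCoeff • ((1 - X) * (g * g)) := by
      simp only [smul_eq_C_mul]; ring
    rw [e2, map_sub, map_smul, map_smul, hA, hgm, smul_eq_mul, smul_eq_mul] at hB
    have h3 := mul_nonneg hl.le (hL1 g)
    have h4 := hpos m
    have h5 : (P (m + 1)).leadingCoeff ≠ 0 := leadingCoeff_ne_zero.mpr (hne _)
    have h6 : 0 ≤ (P (m + 1)).leadingCoeff := by
      by_contra hneg
      push Not at hneg
      nlinarith
    exact lt_of_le_of_ne h6 h5.symm

/-- the partial products `q_j`, `j ≤ k-2`, are positive definite. -/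
theorem stmt_14 (n : ℕ) (hn : 2 ≤ n) (k : ℕ) (hk : 2 ≤ k) (N : ℝ) (hN : 0 < N)
    (P : ℕ → Polynomial ℝ) (hP : IsGegenbauer n P)
    (β θ : Fin (k + 1) → ℝ)
    (hquad : IsQuadratureRule n N β θ (LambdaSpace n k P)) :
    ∀ j ≤ k - 2, ∀ m : ℕ,
      0 ≤ gegInt n (fun t =>
        (∏ i ∈ Finset.univ.filter (fun i : Fin (k + 1) => (i : ℕ) < j), (t - β i)) *
          (P m).eval t) := by
  intro j hj m
  obtain ⟨hβ1, hβ2, hmono, hθ, hex⟩ := hquad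
  set a : ℕ → ℝ := fun l => if h : l < k + 1 then β ⟨l, h⟩ else 0 with ha
  have hab : ∀ i : Fin (k + 1), a i = β i := fun i => by simp only [ha]; rw [dif_pos i.2]
  set Q : ℕ → ℝ[X] := fun i => ∏ l ∈ range i, (X - C (a l)) with hQ
  have hQm : ∀ i, (Q i).Monic := fun i => monic_prod_of_monic _ _ fun l _ => monic_X_sub_C _
  have hQd : ∀ i, (Q i).natDegree = i := fun i => by
    rw [hQ]; simp only
    rw [natDegree_prod_of_monic _ _ fun l _ => monic_X_sub_C _]
    simp
  have hQe : ∀ i x, (Q i).eval x = ∏ l ∈ range i, (x - a l) := fun i x => by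
    simp [hQ, eval_prod]
  have hprod : ∀ t : ℝ, (∏ i ∈ Finset.univ.filter (fun i : Fin (k + 1) => (i : ℕ) < j), (t - β i))
      = (Q j).eval t := by
    intro t
    rw [hQe]
    refine prod_bij (fun i _ => (i : ℕ)) ?_ ?_ ?_ ?_
    · intro i hi; simpa using hi
    · intro i _ i' _ h; exact Fin.ext h
    · intro b hb
      have hb' := mem_range.mp hb
      exact ⟨⟨b, by omega⟩, by simpa using hb', rfl⟩
    · intro i _; rw [hab]
  have hgoal : gegInt n (fun t =>
        (∏ i ∈ Finset.univ.filter (fun i : Fin (k + 1) => (i : ℕ) < j), (t - β i)) *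
          (P m).eval t) = gegL n hn (Q j * P m) := by
    rw [gegL_mul]
    simp only [hprod]
  rw [hgoal]
  have horth := fun m s hs => gegL_orth hn hP m m le_rfl s hs
  by_cases hmj : j < m
  · rw [horth m (Q j)]
    rw [degree_eq_natDegree (hQm j).ne_zero, hQd]; exact_mod_cast hmj
  push Not at hmj
  set L := DL N β θ with hL
  have hGD : ∀ f : ℝ[X], f.natDegree < 2 * k → gegL n hn f = L f := by
    intro f hf
    refine hex _ ⟨f, ⟨by omega, ?_, ?_⟩, rfl⟩
    · rw [← gegL_mul hn]
      exact horth _ _ (lt_of_le_of_lt degree_le_natDegree (by exact_mod_cast hf))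
    · rw [← gegL_mul hn]
      exact horth _ _ (lt_of_le_of_lt degree_le_natDegree (by exact_mod_cast (by omega)))
  have hPSD : ∀ i ≤ j, PSDf (L ∘ₗ LinearMap.mulLeft ℝ (∏ l ∈ range i, (X - C (a l)))) := by
    intro i hi f
    change 0 ≤ L (Q i * (f * f))
    rw [hL, DL_apply]
    simp only [eval_mul]
    refine add_nonneg (div_nonneg (mul_nonneg ?_ (mul_self_nonneg _)) hN.le)
      (sum_nonneg fun x _ => mul_nonneg (hθ x).le (mul_nonneg ?_ (mul_self_nonneg _)))
    · rw [hQe]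
      refine prod_nonneg fun l hl => ?_
      have hl' := mem_range.mp hl
      have := hβ2 ⟨l, by omega⟩
      rw [← hab] at this
      simp only at this
      linarith
    · rw [hQe]
      by_cases hxi : (x : ℕ) < i
      · rw [prod_eq_zero (mem_range.mpr hxi) (by rw [hab, sub_self])]
      · refine prod_nonneg fun l hl => ?_
        have hl' := mem_range.mp hl
        have h := hmono.monotone (show (⟨l, by omega⟩ : Fin (k + 1)) ≤ x by
          rw [Fin.le_def]; simp only; omega)
        rw [← hab ⟨l, by omega⟩] at h
        simp only at h
        linarith
  have hLorth : ∀ m ≤ j, ∀ s : ℝ[X], s.degree < m → L (s * P m) = 0 := by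
    intro m hm s hs
    rw [← hGD, horth m s hs]
    rcases eq_or_ne s 0 with rfl | h0
    · simp; omega
    · rw [degree_eq_natDegree h0] at hs
      norm_cast at hs
      rw [natDegree_mul h0 (P_ne hP m), hP.1]
      omega
  have hlead := lead_pos (L := L) j hP.1 hP.2.1 (by
      intro f
      rw [hL, DL_apply]
      simp only [eval_mul, eval_sub, eval_one, eval_X, sub_self, zero_mul, zero_div, zero_add]
      exact sum_nonneg fun x _ => mul_nonneg (hθ x).le
        (mul_nonneg (by linarith [hβ2 x]) (mul_self_nonneg _)))
    (by
      intro i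
      rw [hL, DL_apply]
      simp only [eval_mul, hP.2.1]
      exact add_pos_of_pos_of_nonneg (by positivity)
        (sum_nonneg fun x _ => mul_nonneg (hθ x).le (mul_self_nonneg _)))
    hLorth m hmj
  have hM : MOrth L m ((P m).leadingCoeff⁻¹ • P m) := by
    refine ⟨?_, ?_, ?_⟩
    · rw [Monic, smul_eq_C_mul, leadingCoeff_mul, leadingCoeff_C]
      exact inv_mul_cancel₀ hlead.ne'
    · rw [natDegree_smul _ (inv_ne_zero hlead.ne'), hP.1]
    · intro s hs
      rw [smul_mul_assoc, map_smul, mul_comm, hLorth m hmj s hs, smul_zero]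
  have hc := core j L a hPSD m _ hM
  rw [hGD _ (by rw [natDegree_mul (hQm j).ne_zero (P_ne hP m), hQd, hP.1]; omega)]
  change 0 ≤ L (_ * Q j) at hc
  rw [smul_mul_assoc, map_smul, smul_eq_mul, mul_comm (P m)] at hc
  exact nonneg_of_mul_nonneg_right hc (inv_pos.mpr hlead)
end

section
/- Let μ_4 be the probability measure on [-1,1] with density (2/π)·√(1-t²), and let P_i^{(4)} denote the corresponding Gegenbauer polynomials. Let γ_1,…,γ_8 be the numbers -1, -(1+√5)/4, -1/2, (1-√5)/4, 0, (√5-1)/4, 1/2, (1+√5)/4, and let ν_1,…,ν_8 be the weights 1/120, 1/10, 1/6, 1/10, 1/4, 1/10, 1/6, 1/10. Then for every real polynomial f of degree at most 19 with ∫ f·P_{12}^{(4)} dμ_4 = 0, one has ∫ f dμ_4 = f(1)/120 + ∑_{i=1}^8 ν_i f(γ_i). -/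
open MeasureTheory Finset
open scoped Classical

lemma aux_cont : Continuous (gegWeight 4) := by
  unfold gegWeight
  refine Continuous.rpow_const (by fun_prop) (fun x => Or.inr (by norm_num))

lemma aux_weight (t : ℝ) : gegWeight 4 t = Real.sqrt (1 - t ^ 2) := by
  unfold gegWeight
  rw [Real.sqrt_eq_rpow]
  norm_num

/-- unnormalized moments -/
noncomputable def auxM (n : ℕ) : ℝ := ∫ t in Set.Icc (-1 : ℝ) 1, t ^ n * gegWeight 4 t

lemma auxM_interval (n : ℕ) : auxM n = ∫ t in (-1 : ℝ)..1, t ^ n * gegWeight 4 t := by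
  rw [auxM, integral_Icc_eq_integral_Ioc, intervalIntegral.integral_of_le (by norm_num)]

lemma auxM_zero : auxM 0 = Real.pi / 2 := by
  rw [auxM_interval, ← integral_sqrt_one_sub_sq]
  simp [aux_weight]

lemma aux_deriv (t : ℝ) :
    HasDerivAt (fun t : ℝ => (1 - t ^ 2) ^ (3 / 2 : ℝ)) (-3 * (t * gegWeight 4 t)) t := by
  have h1 : HasDerivAt (fun t : ℝ => 1 - t ^ 2) (-(2 * t)) t := by
    simpa using (hasDerivAt_pow 2 t).const_sub 1
  have h := h1.rpow_const (p := 3 / 2) (Or.inr (by norm_num))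
  convert h using 1
  unfold gegWeight
  norm_num
  ring

lemma auxM_one : auxM 1 = 0 := by
  have h := intervalIntegral.integral_eq_sub_of_hasDerivAt (a := -1) (b := 1)
    (fun t _ => aux_deriv t)
    (Continuous.intervalIntegrable (by have := aux_cont; fun_prop) _ _)
  rw [intervalIntegral.integral_const_mul] at h
  rw [auxM_interval]
  norm_num at h
  simpa using h

lemma aux_pow32 (t : ℝ) (ht : t ∈ Set.uIcc (-1 : ℝ) 1) :
    (1 - t ^ 2) ^ (3 / 2 : ℝ) = (1 - t ^ 2) * gegWeight 4 t := by
  rw [Set.uIcc_of_le (by norm_num)] at ht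
  have h0 : 0 ≤ 1 - t ^ 2 := by nlinarith [ht.1, ht.2]
  unfold gegWeight
  have : (3 / 2 : ℝ) = 1 + (((4 : ℕ) : ℝ) - 3) / 2 := by norm_num
  rw [this, Real.rpow_add_of_nonneg h0 (by norm_num) (by norm_num), Real.rpow_one]

lemma auxM_rec (n : ℕ) : auxM (n + 2) = (n + 1) / (n + 4) * auxM n := by
  have hc := aux_cont
  have h := intervalIntegral.integral_eq_sub_of_hasDerivAt (a := -1) (b := 1)
    (f := fun t : ℝ => t ^ (n + 1) * (1 - t ^ 2) ^ (3 / 2 : ℝ))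
    (f' := fun t : ℝ => (n + 1) * (t ^ n * gegWeight 4 t)
      - (n + 4) * (t ^ (n + 2) * gegWeight 4 t))
    (fun t ht => by
      have h := (hasDerivAt_pow (n + 1) t).mul (aux_deriv t)
      refine h.congr_deriv ?_
      rw [aux_pow32 t ht]
      push_cast
      ring)
    (Continuous.intervalIntegrable (by fun_prop) _ _)
  rw [intervalIntegral.integral_sub (Continuous.intervalIntegrable (by fun_prop) _ _)
    (Continuous.intervalIntegrable (by fun_prop) _ _),
    intervalIntegral.integral_const_mul, intervalIntegral.integral_const_mul,
    ← auxM_interval, ← auxM_interval] at h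
  norm_num at h
  have : (n : ℝ) + 4 ≠ 0 := by positivity
  field_simp
  linarith

lemma aux_int (p : Polynomial ℝ) :
    IntegrableOn (fun t => p.eval t * gegWeight 4 t) (Set.Icc (-1 : ℝ) 1) := by
  have hc := aux_cont
  have hp : Continuous (fun t => p.eval t) := p.continuous
  exact (hp.mul hc).continuousOn.integrableOn_Icc

/-- integration as a linear functional on polynomials -/
noncomputable def auxL : Polynomial ℝ →ₗ[ℝ] ℝ where
  toFun p := gegInt 4 (fun t => p.eval t)
  map_add' p q := by
    unfold gegInt
    rw [← mul_add, ← integral_add (aux_int p) (aux_int q)]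
    simp only [Polynomial.eval_add, add_mul]
  map_smul' a p := by
    unfold gegInt
    simp only [Polynomial.eval_smul, smul_eq_mul, mul_assoc, integral_const_mul, RingHom.id_apply]
    ring

lemma auxL_apply (p : Polynomial ℝ) : auxL p = gegInt 4 (fun t => p.eval t) := rfl

lemma auxL_X (n : ℕ) : auxL (Polynomial.X ^ n) = auxM n / auxM 0 := by
  rw [auxL_apply]
  unfold gegInt auxM
  simp [div_eq_inv_mul]

lemma auxL_zero : auxL (Polynomial.X ^ 0) = 1 := by
  rw [auxL_X, div_self]
  rw [auxM_zero]
  positivity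

lemma auxL_one : auxL (Polynomial.X ^ 1) = 0 := by
  rw [auxL_X, auxM_one, zero_div]

lemma auxL_rec (n : ℕ) :
    auxL (Polynomial.X ^ (n + 2)) = (n + 1) / (n + 4) * auxL (Polynomial.X ^ n) := by
  rw [auxL_X, auxL_X, auxM_rec]
  ring

/-- moment values -/
noncomputable def auxm : ℕ → ℝ
  | 0 => 1
  | 1 => 0
  | (n + 2) => (n + 1) / (n + 4) * auxm n

lemma auxL_m : ∀ n : ℕ, auxL (Polynomial.X ^ n) = auxm n
  | 0 => auxL_zero
  | 1 => auxL_one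
  | (n + 2) => by rw [auxL_rec, auxL_m n, auxm]

lemma auxL_CX (a : ℝ) (n : ℕ) : auxL (Polynomial.C a * Polynomial.X ^ n) = a * auxm n := by
  rw [← Polynomial.smul_eq_C_mul, map_smul, auxL_m, smul_eq_mul]

lemma aux_orth (P : ℕ → Polynomial ℝ) (hP : IsGegenbauer 4 P) (m : ℕ) (hm : m ≤ 12) :
    ∀ g : Polynomial ℝ, g.degree < m → auxL (g * P 12) = 0 := by
  induction m with
  | zero =>
    intro g hg
    have : g = 0 := by
      ext k
      exact (Polynomial.degree_lt_iff_coeff_zero g 0).1 hg k (Nat.zero_le _)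
    simp [this]
  | succ m ih =>
    intro g hg
    obtain ⟨h1, h2, h3⟩ := hP
    have hne : P m ≠ 0 := by
      intro h
      have := h2 m
      simp [h] at this
    have hlc : (P m).coeff m ≠ 0 := by
      have := Polynomial.leadingCoeff_ne_zero.2 hne
      rwa [Polynomial.leadingCoeff, h1] at this
    set a := g.coeff m / (P m).coeff m with ha
    have hd : (g - a • P m).degree < (m : ℕ) := by
      rw [Polynomial.degree_lt_iff_coeff_zero]
      intro k hk
      rcases hk.eq_or_lt with rfl | hk
      · simp only [Polynomial.coeff_sub, Polynomial.coeff_smul, smul_eq_mul, ha]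
        field_simp
        ring
      · have e1 := (Polynomial.degree_lt_iff_coeff_zero g (m + 1)).1 hg k hk
        have e2 : (P m).coeff k = 0 :=
          Polynomial.coeff_eq_zero_of_natDegree_lt (by rw [h1]; exact hk)
        simp [e1, e2]
    have e := ih (by omega) _ hd
    have e3 : auxL (P m * P 12) = 0 := by
      rw [auxL_apply]
      simpa using h3 m 12 (by omega)
    rw [sub_mul, map_sub, smul_mul_assoc, map_smul, e3] at e
    simpa using e

lemma aux_expand (p : Polynomial ℝ) (hp : p.natDegree = 12) (j : ℕ) :
    auxL (Polynomial.X ^ j * p) = ∑ k ∈ Finset.range 13, p.coeff k * auxm (k + j) := by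
  conv_lhs => rw [p.as_sum_range_C_mul_X_pow' (n := 13) (by omega)]
  rw [Finset.mul_sum, map_sum]
  refine Finset.sum_congr rfl fun k _ => ?_
  rw [← auxL_CX]
  congr 1
  ring

lemma aux_coeffs (P : ℕ → Polynomial ℝ) (hP : IsGegenbauer 4 P) :
    ∃ c : ℝ, c ≠ 0 ∧ ∀ j, auxL (Polynomial.X ^ j * P 12) =
      c * (auxm j - 84 * auxm (2 + j) + 1120 * auxm (4 + j) - 5376 * auxm (6 + j)
        + 11520 * auxm (8 + j) - 11264 * auxm (10 + j) + 4096 * auxm (12 + j)) := by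
  have hd : (P 12).natDegree = 12 := hP.1 12
  have hne : (P 12).coeff 12 ≠ 0 := by
    have h0 : P 12 ≠ 0 := by
      intro h
      rw [h] at hd
      simp at hd
    have := Polynomial.leadingCoeff_ne_zero.2 h0
    rwa [Polynomial.leadingCoeff, hd] at this
  have ho : ∀ j < 12, ∑ k ∈ Finset.range 13, (P 12).coeff k * auxm (k + j) = 0 := by
    intro j hj
    rw [← aux_expand _ hd]
    refine aux_orth P hP 12 le_rfl _ ?_
    rw [Polynomial.degree_X_pow]
    exact_mod_cast hj
  refine ⟨(P 12).coeff 12 / 4096, by positivity, fun j => ?_⟩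
  rw [aux_expand _ hd]
  generalize (P 12).coeff = q at *
  have h0 := ho 0 (by norm_num)
  have h1 := ho 1 (by norm_num)
  have h2 := ho 2 (by norm_num)
  have h3 := ho 3 (by norm_num)
  have h4 := ho 4 (by norm_num)
  have h5 := ho 5 (by norm_num)
  have h6 := ho 6 (by norm_num)
  have h7 := ho 7 (by norm_num)
  have h8 := ho 8 (by norm_num)
  have h9 := ho 9 (by norm_num)
  have h10 := ho 10 (by norm_num)
  have h11 := ho 11 (by norm_num)
  clear ho hne hd
  norm_num [Finset.sum_range_succ, auxm] at h0 h1 h2 h3 h4 h5 h6 h7 h8 h9 h10 h11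
  have e0 : q 0 = q 12 / 4096 * (1) := by linarith only [h0, h2, h4, h6, h8, h10]
  have e1 : q 1 = q 12 / 4096 * (0) := by linarith only [h1, h3, h5, h7, h9, h11]
  have e2 : q 2 = q 12 / 4096 * (-84) := by linarith only [h0, h2, h4, h6, h8, h10]
  have e3 : q 3 = q 12 / 4096 * (0) := by linarith only [h1, h3, h5, h7, h9, h11]
  have e4 : q 4 = q 12 / 4096 * (1120) := by linarith only [h0, h2, h4, h6, h8, h10]
  have e5 : q 5 = q 12 / 4096 * (0) := by linarith only [h1, h3, h5, h7, h9, h11]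
  have e6 : q 6 = q 12 / 4096 * (-5376) := by linarith only [h0, h2, h4, h6, h8, h10]
  have e7 : q 7 = q 12 / 4096 * (0) := by linarith only [h1, h3, h5, h7, h9, h11]
  have e8 : q 8 = q 12 / 4096 * (11520) := by linarith only [h0, h2, h4, h6, h8, h10]
  have e9 : q 9 = q 12 / 4096 * (0) := by linarith only [h1, h3, h5, h7, h9, h11]
  have e10 : q 10 = q 12 / 4096 * (-11264) := by linarith only [h0, h2, h4, h6, h8, h10]
  have e11 : q 11 = q 12 / 4096 * (0) := by linarith only [h1, h3, h5, h7, h9, h11]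
  simp only [Finset.sum_range_succ, Finset.sum_range_zero, e0, e1, e2, e3, e4, e5, e6, e7, e8, e9, e10, e11]
  simp only [zero_add]
  ring

lemma aux_mono (i : ℕ) (hi : i < 20) :
    auxm i = (1 : ℝ) ^ i / 120 +
        ((1 / 120) * (-1 : ℝ) ^ i +
          (1 / 10) * (-(1 + Real.sqrt 5) / 4) ^ i +
          (1 / 6) * (-(1 / 2)) ^ i +
          (1 / 10) * ((1 - Real.sqrt 5) / 4) ^ i +
          (1 / 4) * 0 ^ i +
          (1 / 10) * ((Real.sqrt 5 - 1) / 4) ^ i +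
          (1 / 6) * (1 / 2) ^ i +
          (1 / 10) * ((1 + Real.sqrt 5) / 4) ^ i) -
      (auxm i - 84 * auxm (2 + i) + 1120 * auxm (4 + i) - 5376 * auxm (6 + i)
        + 11520 * auxm (8 + i) - 11264 * auxm (10 + i) + 4096 * auxm (12 + i)) := by
  have h2 : Real.sqrt 5 ^ 2 = 5 := Real.sq_sqrt (by norm_num)
  generalize Real.sqrt 5 = s at *
  have h4 : s ^ 4 = 25 := by rw [show s ^ 4 = (s ^ 2) ^ 2 by ring, h2]; norm_num
  have h6 : s ^ 6 = 125 := by rw [show s ^ 6 = (s ^ 2) ^ 3 by ring, h2]; norm_num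
  have h8 : s ^ 8 = 625 := by rw [show s ^ 8 = (s ^ 2) ^ 4 by ring, h2]; norm_num
  have h10 : s ^ 10 = 3125 := by rw [show s ^ 10 = (s ^ 2) ^ 5 by ring, h2]; norm_num
  have h12 : s ^ 12 = 15625 := by rw [show s ^ 12 = (s ^ 2) ^ 6 by ring, h2]; norm_num
  have h14 : s ^ 14 = 78125 := by rw [show s ^ 14 = (s ^ 2) ^ 7 by ring, h2]; norm_num
  have h16 : s ^ 16 = 390625 := by rw [show s ^ 16 = (s ^ 2) ^ 8 by ring, h2]; norm_num
  have h18 : s ^ 18 = 1953125 := by rw [show s ^ 18 = (s ^ 2) ^ 9 by ring, h2]; norm_num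
  interval_cases i <;> norm_num [auxm] <;> ring_nf <;> norm_num [h2, h4, h6, h8, h10, h12, h14, h16, h18]

/-- the third-level `1/120`-quadrature rule coming from the `600`-cell,
exact on `𝒫₁₉ ∩ {P₁₂^{(4)}}^⊥`. -/
theorem stmt_18 (P : ℕ → Polynomial ℝ) (hP : IsGegenbauer 4 P)
    (f : Polynomial ℝ) (hdeg : f.natDegree ≤ 19)
    (horth : gegInt 4 (fun t => f.eval t * (P 12).eval t) = 0) :
    gegInt 4 (fun t => f.eval t) =
      f.eval 1 / 120 +
        ((1 / 120) * f.eval (-1) +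
          (1 / 10) * f.eval (-(1 + Real.sqrt 5) / 4) +
          (1 / 6) * f.eval (-(1 / 2)) +
          (1 / 10) * f.eval ((1 - Real.sqrt 5) / 4) +
          (1 / 4) * f.eval 0 +
          (1 / 10) * f.eval ((Real.sqrt 5 - 1) / 4) +
          (1 / 6) * f.eval (1 / 2) +
          (1 / 10) * f.eval ((1 + Real.sqrt 5) / 4)) := by
  obtain ⟨c, hc, hj⟩ := aux_coeffs P hP
  have ho : auxL (f * P 12) = 0 := by
    rw [auxL_apply]
    simpa using horth
  have hf := f.as_sum_range_C_mul_X_pow' (n := 20) (by omega)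
  have h1 : auxL (f * P 12) = c * ∑ i ∈ Finset.range 20, f.coeff i *
      (auxm i - 84 * auxm (2 + i) + 1120 * auxm (4 + i) - 5376 * auxm (6 + i)
        + 11520 * auxm (8 + i) - 11264 * auxm (10 + i) + 4096 * auxm (12 + i)) := by
    conv_lhs => rw [hf]
    rw [Finset.sum_mul, map_sum, Finset.mul_sum]
    refine Finset.sum_congr rfl fun i _ => ?_
    rw [mul_assoc, ← Polynomial.smul_eq_C_mul, map_smul, hj, smul_eq_mul]
    ring
  rw [ho] at h1
  have h2 := (mul_eq_zero.1 h1.symm).resolve_left hc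
  have h3 : auxL f = ∑ i ∈ Finset.range 20, f.coeff i * auxm i := by
    conv_lhs => rw [hf]
    rw [map_sum]
    exact Finset.sum_congr rfl fun i _ => auxL_CX _ _
  have h4 : ∀ x : ℝ, f.eval x = ∑ i ∈ Finset.range 20, f.coeff i * x ^ i := fun x =>
    Polynomial.eval_eq_sum_range' (by omega) x
  rw [← auxL_apply, h3, ← sub_eq_zero, ← neg_eq_zero]
  refine Eq.trans ?_ h2
  simp only [h4, Finset.mul_sum, Finset.sum_div, ← Finset.sum_add_distrib,
    ← Finset.sum_sub_distrib, ← Finset.sum_neg_distrib]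
  refine Finset.sum_congr rfl fun i hi => ?_
  have := aux_mono i (Finset.mem_range.1 hi)
  linear_combination (-f.coeff i) * this
end
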